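/- Let u : ℝ² → ℝ be a smooth, nowhere-vanishing function of (x,t) satisfying the mKdV equation u_t + u_xxx − 6u²u_x = 0, let Λ ∈ ℝ, and let (ψ₁,ψ₂) be smooth real functions on ℝ² satisfying the mKdV Lax pair ψ_x = b·ψ, ψ_t = c·ψ with b = [[−u, Λ],[Λ, u]] and c = [[u_xx − 2u³ + 4Λ²u, 2Λ(u² − u_x − 2Λ²)],[2Λ(u² + u_x − 2Λ²), −u_xx + 2u³ − 4Λ²u]]. Let z : ℝ² → ℝ be smooth with z_x = u and z_t = 2u³ − u_xx, let U be a smooth function of (z,τ) with U(z(x,t), t) = u(x,t), and let Ψ₁, Ψ₂ be smooth functions of (z,τ) with Ψ_i(z(x,t), t) = ψ_i(x,t) for all (x,t), i = 1,2. Then at every point of the form (z(x,t), t), the vector Ψ = (Ψ₁,Ψ₂)ᵀ satisfies the RmKdV Lax pair Ψ_z = B·Ψ and Ψ_τ = Λ·C·Ψ, where B = [[−1, Λ/U],[Λ/U, 1]] and C = [[4ΛU, U·U_zz + U_z² − 2U·U_z − 4Λ²],[U·U_zz + U_z² + 2U·U_z − 4Λ², −4ΛU]]. -/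

import Mathlib

/-!
Along the transformation `(x, t) ↦ (z(x, t), t)` the chain rule reads `∂_x = z_x ∂_z` and
`∂_t = z_t ∂_z + ∂_τ`. Applied twice to `u = U(z, t)` with `z_x = u`, it gives
`u_xx = u (U U_zz + U_z²)`, so that `z_t = 2u³ - u_xx` is the multiple `w = 2U² - U U_zz - U_z²` of
`z_x`. Hence `∂_τ = ∂_t - w ∂_x` involves no division, and `∂_z = u⁻¹ ∂_x` only that by `u`.
Substituting the mKdV Lax pair into `u⁻¹ ψ_x` and `ψ_t - w ψ_x` gives the RmKdV Lax pair.
-/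

noncomputable section

/-- Partial derivative of `f` with respect to its first argument. -/
def d1 (f : ℝ → ℝ → ℝ) : ℝ → ℝ → ℝ := fun a b => deriv (fun a' => f a' b) a

/-- Partial derivative of `f` with respect to its second argument. -/
def d2 (f : ℝ → ℝ → ℝ) : ℝ → ℝ → ℝ := fun a b => deriv (fun b' => f a b') b

/-- Smoothness of a two-variable real function. -/
def Smooth2 (f : ℝ → ℝ → ℝ) : Prop := ContDiff ℝ (⊤ : ℕ∞) (fun p : ℝ × ℝ => f p.1 p.2)

open Function

lemma fderiv_uncurry_apply {F : ℝ → ℝ → ℝ} {a b : ℝ} (hF : DifferentiableAt ℝ (uncurry F) (a, b))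
    (v w : ℝ) : fderiv ℝ (uncurry F) (a, b) (v, w) = d1 F a b * v + d2 F a b * w := by
  have h_left : HasDerivAt (fun a' => (a', b)) (1, 0) a :=
    (hasDerivAt_id a).prodMk (hasDerivAt_const a b)
  have h_right : HasDerivAt (fun b' => (a, b')) (0, 1) b :=
    (hasDerivAt_const b a).prodMk (hasDerivAt_id b)
  have h_d1 : d1 F a b = fderiv ℝ (uncurry F) (a, b) (1, 0) :=
    (HasFDerivAt.comp_hasDerivAt (l := uncurry F) a hF.hasFDerivAt h_left).deriv
  have h_d2 : d2 F a b = fderiv ℝ (uncurry F) (a, b) (0, 1) :=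
    (hF.hasFDerivAt.comp_hasDerivAt b h_right).deriv
  calc fderiv ℝ (uncurry F) (a, b) (v, w)
      = fderiv ℝ (uncurry F) (a, b) (v • (1, 0) + w • (0, 1)) := by simp
    _ = d1 F a b * v + d2 F a b * w := by
      rw [map_add, map_smul, map_smul, h_d1, h_d2, smul_eq_mul, smul_eq_mul, mul_comm v, mul_comm w]

lemma differentiableAt_left_of_uncurry {F : ℝ → ℝ → ℝ} {a b : ℝ}
    (hF : DifferentiableAt ℝ (uncurry F) (a, b)) :
    DifferentiableAt ℝ (fun a' => F a' b) a :=
  DifferentiableAt.comp (g := uncurry F) (f := fun a' => (a', b)) a hF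
    (differentiableAt_id.prodMk (differentiableAt_const b))

section ChangeOfVariable

variable {F f z : ℝ → ℝ → ℝ} {x t : ℝ}

lemma d1_eq_of_comp (hF : DifferentiableAt ℝ (fun ζ => F ζ t) (z x t))
    (hz : DifferentiableAt ℝ (fun y => z y t) x) (hFf : ∀ y, F (z y t) t = f y t) :
    d1 f x t = d1 F (z x t) t * d1 z x t := by
  simp only [d1, ← hFf]
  exact deriv_comp x hF hz

lemma d1_apply_eq_d1_div (hF : DifferentiableAt ℝ (fun ζ => F ζ t) (z x t))
    (hz : d1 z x t ≠ 0) (hFf : ∀ y, F (z y t) t = f y t) :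
    d1 F (z x t) t = d1 f x t / d1 z x t := by
  rw [d1_eq_of_comp hF (differentiableAt_of_deriv_ne_zero hz) hFf, mul_div_cancel_right₀ _ hz]

lemma d2_eq_of_comp (hF : DifferentiableAt ℝ (uncurry F) (z x t, t))
    (hz : DifferentiableAt ℝ (z x) t) (hFf : ∀ s, F (z x s) s = f x s) :
    d2 f x t = d1 F (z x t) t * d2 z x t + d2 F (z x t) t := by
  have h_chain : HasDerivAt (fun s => F (z x s) s)
      (fderiv ℝ (uncurry F) (z x t, t) (d2 z x t, 1)) t :=
    hF.hasFDerivAt.comp_hasDerivAt_of_eq t (hz.hasDerivAt.prodMk (hasDerivAt_id t)) rfl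
  rw [fderiv_uncurry_apply hF, mul_one] at h_chain
  simp only [hFf] at h_chain
  exact h_chain.deriv

lemma d2_apply_eq_d2_sub_mul_d1 (hF : DifferentiableAt ℝ (uncurry F) (z x t, t))
    (hz₁ : DifferentiableAt ℝ (fun y => z y t) x) (hz₂ : DifferentiableAt ℝ (z x) t)
    (hFf : ∀ y s, F (z y s) s = f y s) {w : ℝ} (hw : d2 z x t = w * d1 z x t) :
    d2 F (z x t) t = d2 f x t - w * d1 f x t := by
  have hF₁ : DifferentiableAt ℝ (fun ζ => F ζ t) (z x t) := differentiableAt_left_of_uncurry hF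
  rw [d2_eq_of_comp hF hz₂ (hFf x), d1_eq_of_comp hF₁ hz₁ (hFf · t), hw]
  ring

lemma d1_d1_eq_of_d1_eq (hF : ContDiff ℝ 2 (fun ζ => F ζ t))
    (hz : Differentiable ℝ (fun y => z y t)) (hzf : ∀ y, d1 z y t = f y t)
    (hFf : ∀ y, F (z y t) t = f y t) :
    d1 (d1 f) x t = f x t * (F (z x t) t * d1 (d1 F) (z x t) t + d1 F (z x t) t ^ 2) := by
  have hF₀ : Differentiable ℝ (fun ζ => F ζ t) := hF.differentiable two_ne_zero
  have hF₁ : Differentiable ℝ (fun ζ => d1 F ζ t) := hF.differentiable_deriv_two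
  have hf : Differentiable ℝ (fun y => f y t) := by
    simp only [← hFf]
    exact hF₀.comp hz
  have h_d1f (y : ℝ) : d1 f y t = d1 F (z y t) t * f y t := by
    rw [d1_eq_of_comp (hF₀ _) (hz y) hFf, hzf]
  have h_d1F : deriv (fun y => d1 F (z y t) t) x = d1 (d1 F) (z x t) t * d1 z x t :=
    deriv_comp x (hF₁ _) (hz x)
  calc d1 (d1 f) x t
      = deriv (fun y => d1 F (z y t) t * f y t) x := congrArg (deriv · x) (funext h_d1f)
    _ = deriv (fun y => d1 F (z y t) t) x * f x t + d1 F (z x t) t * d1 f x t :=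
      deriv_fun_mul ((hF₁.comp hz) x) (hf x)
    _ = f x t * (F (z x t) t * d1 (d1 F) (z x t) t + d1 F (z x t) t ^ 2) := by
      rw [h_d1F, hzf, h_d1f, hFf]
      ring

end ChangeOfVariable

namespace Smooth2

variable {f : ℝ → ℝ → ℝ}

lemma differentiable_uncurry (hf : Smooth2 f) : Differentiable ℝ (uncurry f) :=
  ContDiff.differentiable hf (by simp)

lemma contDiff_left (hf : Smooth2 f) (t : ℝ) : ContDiff ℝ (⊤ : ℕ∞) (fun x => f x t) :=
  ContDiff.comp (g := uncurry f) hf (contDiff_prodMk_left t)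

lemma contDiff_right (hf : Smooth2 f) (x : ℝ) : ContDiff ℝ (⊤ : ℕ∞) (f x) :=
  ContDiff.comp (g := uncurry f) hf (contDiff_prodMk_right x)

end Smooth2

theorem reciprocal_mKdV_LaxPair_to_RmKdV_LaxPair_general
    {u ψ₁ ψ₂ z U Ψ₁ Ψ₂ : ℝ → ℝ → ℝ} {Λ x t : ℝ}
    (hz₁ : Differentiable ℝ (fun y => z y t)) (hz₂ : DifferentiableAt ℝ (z x) t)
    (hU : ContDiff ℝ 2 (fun ζ => U ζ t))
    (hΨ₁ : DifferentiableAt ℝ (uncurry Ψ₁) (z x t, t))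
    (hΨ₂ : DifferentiableAt ℝ (uncurry Ψ₂) (z x t, t))
    (hx1 : d1 ψ₁ x t = -(u x t) * ψ₁ x t + Λ * ψ₂ x t)
    (hx2 : d1 ψ₂ x t = Λ * ψ₁ x t + u x t * ψ₂ x t)
    (ht1 : d2 ψ₁ x t =
      (d1 (d1 u) x t - 2 * (u x t) ^ 3 + 4 * Λ ^ 2 * u x t) * ψ₁ x t
        + 2 * Λ * ((u x t) ^ 2 - d1 u x t - 2 * Λ ^ 2) * ψ₂ x t)
    (ht2 : d2 ψ₂ x t =
      2 * Λ * ((u x t) ^ 2 + d1 u x t - 2 * Λ ^ 2) * ψ₁ x t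
        - (d1 (d1 u) x t - 2 * (u x t) ^ 3 + 4 * Λ ^ 2 * u x t) * ψ₂ x t)
    (hzx : ∀ y, d1 z y t = u y t)
    (hzt : d2 z x t = 2 * (u x t) ^ 3 - d1 (d1 u) x t)
    (hUu : ∀ y, U (z y t) t = u y t)
    (hΨψ₁ : ∀ y s, Ψ₁ (z y s) s = ψ₁ y s)
    (hΨψ₂ : ∀ y s, Ψ₂ (z y s) s = ψ₂ y s) :
    (u x t ≠ 0 →
      d1 Ψ₁ (z x t) t = -(Ψ₁ (z x t) t) + (Λ / U (z x t) t) * Ψ₂ (z x t) t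
        ∧ d1 Ψ₂ (z x t) t = (Λ / U (z x t) t) * Ψ₁ (z x t) t + Ψ₂ (z x t) t)
      ∧ d2 Ψ₁ (z x t) t = Λ *
          (4 * Λ * U (z x t) t * Ψ₁ (z x t) t
            + (U (z x t) t * d1 (d1 U) (z x t) t + (d1 U (z x t) t) ^ 2
                - 2 * U (z x t) t * d1 U (z x t) t - 4 * Λ ^ 2) * Ψ₂ (z x t) t)
      ∧ d2 Ψ₂ (z x t) t = Λ *
          ((U (z x t) t * d1 (d1 U) (z x t) t + (d1 U (z x t) t) ^ 2
              + 2 * U (z x t) t * d1 U (z x t) t - 4 * Λ ^ 2) * Ψ₁ (z x t) t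
            - 4 * Λ * U (z x t) t * Ψ₂ (z x t) t) := by
  have hux : d1 u x t = d1 U (z x t) t * u x t := by
    rw [d1_eq_of_comp (hU.differentiable two_ne_zero _) (hz₁ x) hUu, hzx]
  have huxx : d1 (d1 u) x t =
      u x t * (U (z x t) t * d1 (d1 U) (z x t) t + d1 U (z x t) t ^ 2) :=
    d1_d1_eq_of_d1_eq hU hz₁ hzx hUu
  have hw : d2 z x t =
      (2 * u x t ^ 2 - u x t * d1 (d1 U) (z x t) t - d1 U (z x t) t ^ 2) * d1 z x t := by
    rw [hzt, huxx, hUu, hzx]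
    ring
  refine ⟨fun hu => ?_, ?_, ?_⟩
  · have hzx_ne : d1 z x t ≠ 0 := hzx x ▸ hu
    rw [d1_apply_eq_d1_div (differentiableAt_left_of_uncurry hΨ₁) hzx_ne (hΨψ₁ · t),
      d1_apply_eq_d1_div (differentiableAt_left_of_uncurry hΨ₂) hzx_ne (hΨψ₂ · t),
      hx1, hx2, hzx, hUu, hΨψ₁, hΨψ₂]
    constructor <;> field_simp
  · rw [d2_apply_eq_d2_sub_mul_d1 hΨ₁ (hz₁ x) hz₂ hΨψ₁ hw, ht1, hx1, huxx, hux, hUu, hΨψ₁, hΨψ₂]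
    ring
  · rw [d2_apply_eq_d2_sub_mul_d1 hΨ₂ (hz₁ x) hz₂ hΨψ₂ hw, ht2, hx2, huxx, hux, hUu, hΨψ₁, hΨψ₂]
    ring

/-- the reciprocal transformation of the mKdV Lax pair yields the
RmKdV Lax pair `Ψ_z = B·Ψ`, `Ψ_τ = Λ·C·Ψ` at every point `(z(x,t), t)`. -/
theorem reciprocal_mKdV_LaxPair_to_RmKdV_LaxPair
    (u ψ₁ ψ₂ z U Ψ₁ Ψ₂ : ℝ → ℝ → ℝ) (Λ : ℝ)
    (hu : Smooth2 u) (hψ₁ : Smooth2 ψ₁) (hψ₂ : Smooth2 ψ₂)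
    (hz : Smooth2 z) (hU : Smooth2 U) (hΨ₁ : Smooth2 Ψ₁) (hΨ₂ : Smooth2 Ψ₂)
    (hne : ∀ x t, u x t ≠ 0)
    (hmKdV : ∀ x t, d2 u x t + d1 (d1 (d1 u)) x t - 6 * (u x t) ^ 2 * d1 u x t = 0)
    -- mKdV Lax pair  ψ_x = b·ψ,  ψ_t = c·ψ :
    (hx1 : ∀ x t, d1 ψ₁ x t = -(u x t) * ψ₁ x t + Λ * ψ₂ x t)
    (hx2 : ∀ x t, d1 ψ₂ x t = Λ * ψ₁ x t + u x t * ψ₂ x t)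
    (ht1 : ∀ x t, d2 ψ₁ x t =
      (d1 (d1 u) x t - 2 * (u x t) ^ 3 + 4 * Λ ^ 2 * u x t) * ψ₁ x t
        + 2 * Λ * ((u x t) ^ 2 - d1 u x t - 2 * Λ ^ 2) * ψ₂ x t)
    (ht2 : ∀ x t, d2 ψ₂ x t =
      2 * Λ * ((u x t) ^ 2 + d1 u x t - 2 * Λ ^ 2) * ψ₁ x t
        - (d1 (d1 u) x t - 2 * (u x t) ^ 3 + 4 * Λ ^ 2 * u x t) * ψ₂ x t)
    -- reciprocal transformation :
    (hzx : ∀ x t, d1 z x t = u x t)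
    (hzt : ∀ x t, d2 z x t = 2 * (u x t) ^ 3 - d1 (d1 u) x t)
    (hUu : ∀ x t, U (z x t) t = u x t)
    (hΨψ₁ : ∀ x t, Ψ₁ (z x t) t = ψ₁ x t)
    (hΨψ₂ : ∀ x t, Ψ₂ (z x t) t = ψ₂ x t) :
    ∀ x t,
      -- spatial part  Ψ_z = B·Ψ :
      (d1 Ψ₁ (z x t) t =
          -(Ψ₁ (z x t) t) + (Λ / U (z x t) t) * Ψ₂ (z x t) t
        ∧ d1 Ψ₂ (z x t) t =
          (Λ / U (z x t) t) * Ψ₁ (z x t) t + Ψ₂ (z x t) t)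
      -- temporal part  Ψ_τ = Λ·C·Ψ :
      ∧ (d2 Ψ₁ (z x t) t = Λ *
          (4 * Λ * U (z x t) t * Ψ₁ (z x t) t
            + (U (z x t) t * d1 (d1 U) (z x t) t + (d1 U (z x t) t) ^ 2
                - 2 * U (z x t) t * d1 U (z x t) t - 4 * Λ ^ 2) * Ψ₂ (z x t) t)
        ∧ d2 Ψ₂ (z x t) t = Λ *
          ((U (z x t) t * d1 (d1 U) (z x t) t + (d1 U (z x t) t) ^ 2
              + 2 * U (z x t) t * d1 U (z x t) t - 4 * Λ ^ 2) * Ψ₁ (z x t) t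
            - 4 * Λ * U (z x t) t * Ψ₂ (z x t) t)) := by
  intro x t
  have hz₁ : Differentiable ℝ (fun y => z y t) := (hz.contDiff_left t).differentiable (by simp)
  have hz₂ : Differentiable ℝ (z x) := (hz.contDiff_right x).differentiable (by simp)
  have hU₂ : ContDiff ℝ 2 (fun ζ => U ζ t) := (hU.contDiff_left t).of_le (by norm_cast)
  have hlax := reciprocal_mKdV_LaxPair_to_RmKdV_LaxPair_general hz₁ (hz₂ t) hU₂
    (hΨ₁.differentiable_uncurry _) (hΨ₂.differentiable_uncurry _) (hx1 x t) (hx2 x t)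
    (ht1 x t) (ht2 x t) (hzx · t) (hzt x t) (hUu · t) hΨψ₁ hΨψ₂
  exact hlax.imp_left fun h_spatial => h_spatial (hne x t)
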